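/- arXiv:2007.15289 — 3 statements merged into one kernel-verified Lean document; each statement's English description precedes it below -/
import Mathlib

section
/- Let M be a finitely generated ℤ[t,t⁻¹]-module that is ℤ-torsion free and annihilated by some q(t) with |q(1)| = 1, and let R be a ℤ[t,t⁻¹]-algebra with no Ξ-torsion. Then for any Ξ-divisible R-module N, the module Ext¹_{R}(M ⊗_{ℤ[t,t⁻¹]} R, N) vanishes. -/
/-!
Write `Λ = ℤ[t,t⁻¹]` and choose a surjection `p : Λⁿ → M` with kernel `K`.

* `K` is projective. As `M` is `ℤ`-torsion free, it is `ℤ`-flat, so `Λ ⊗_ℤ M` is `Λ`-flat, and the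
  characteristic sequence `0 → Λ ⊗_ℤ M → Λ ⊗_ℤ M → M → 0`, with first map `t ⊗ 1 - 1 ⊗ t`, shows that
  `M` has flat dimension at most one. So `K` is flat (`flat_ker_of_surjective`); as `Λ` is
  Noetherian, `K` is finitely presented, hence projective.
* Every `Λ`-linear `f : K → N` extends to `Λⁿ` (`extend_of_projective_ker`). Multiplication by `q` is
  onto on `N`, so projectivity of `K` gives `g` with `f = q g`. As `q` kills `M`, `q Λⁿ ⊆ K`, and
  `x ↦ g (q x)` is an extension of `f`.
* By right exactness of `R ⊗ -`, the kernel of `R ⊗ Λⁿ → R ⊗ M` is the image of `R ⊗ K`, so the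
  extension property passes to this presentation over `R`, and by comparison of presentations to any
  surjection onto `R ⊗ M` from a projective module (`extend_tensor`). For degree zero of a projective resolution this is
  the vanishing of `Ext¹`.
-/

open LaurentPolynomial in
/-- Evaluation of an integer Laurent polynomial at `t = 1`, as an algebra homomorphism. -/
noncomputable def evalOne : LaurentPolynomial ℤ →ₐ[ℤ] ℤ :=
  AddMonoidAlgebra.lift ℤ ℤ ℤ 1

/-- The multiplicative set `Ξ = {p ∈ ℤ[t,t⁻¹] : |p(1)| = 1}`. -/
noncomputable def Xi : Submonoid (LaurentPolynomial ℤ) :=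
  Submonoid.comap (evalOne : LaurentPolynomial ℤ →ₐ[ℤ] ℤ).toRingHom.toMonoidHom
    (IsUnit.submonoid ℤ)

lemma mem_Xi_iff (p : LaurentPolynomial ℤ) : p ∈ Xi ↔ |evalOne p| = 1 := by
  constructor
  · intro h
    exact Int.isUnit_iff_abs_eq.mp h
  · intro h
    exact Int.isUnit_iff_abs_eq.mpr h

/-- The localization `Ξ⁻¹ℤ[t,t⁻¹]`. -/
abbrev XiLoc : Type := Localization Xi

/-- The quotient module `Ξ⁻¹ℤ[t,t⁻¹]/ℤ[t,t⁻¹]`. -/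
abbrev XiQuot : Type :=
  XiLoc ⧸ LinearMap.range (Algebra.linearMap (LaurentPolynomial ℤ) XiLoc)

open CategoryTheory TensorProduct

/-! ### Stability of flatness -/

/-- In `0 → K → E → P → 0` with `P` flat, `K ⊗ X → E ⊗ X` stays injective for every `X`, so
flatness of `E` passes to `K`. -/
lemma flat_ker {A : Type} [CommRing A] {E P : Type} [AddCommGroup E] [AddCommGroup P]
    [Module A E] [Module A P] [Module.Flat A E] [Module.Flat A P] (f : E →ₗ[A] P)
    (hf : Function.Surjective f) : Module.Flat A (LinearMap.ker f) := by
  rw [Module.Flat.iff_lTensor_preserves_injective_linearMap]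
  intro X Y _ _ _ _ u hu
  have h1 : Function.Injective ((LinearMap.ker f).subtype.rTensor X) := by
    rw [← LinearMap.lTensor_inj_iff_rTensor_inj]
    exact LinearMap.lTensor_injective_of_exact_of_flat f hf _ Subtype.val_injective
      (LinearMap.exact_subtype_ker_map f) X
  have h2 : Function.Injective (u.lTensor E) :=
    Module.Flat.lTensor_preserves_injective_linearMap u hu
  have h3 : (u.lTensor E).comp ((LinearMap.ker f).subtype.rTensor X) =
      ((LinearMap.ker f).subtype.rTensor Y).comp (u.lTensor (LinearMap.ker f)) := by
    rw [LinearMap.lTensor_comp_rTensor, LinearMap.rTensor_comp_lTensor]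
  have h4 : Function.Injective
      (((LinearMap.ker f).subtype.rTensor Y).comp (u.lTensor (LinearMap.ker f))) := by
    rw [← h3]; exact h2.comp h1
  exact Function.Injective.of_comp (f := (LinearMap.ker f).subtype.rTensor Y) h4

lemma flat_prod {A : Type} [CommRing A] {E P : Type} [AddCommGroup E] [AddCommGroup P]
    [Module A E] [Module A P] [Module.Flat A E] [Module.Flat A P] : Module.Flat A (E × P) := by
  rw [Module.Flat.iff_lTensor_preserves_injective_linearMap]
  intro X Y _ _ _ _ u hu
  rw [injective_iff_map_eq_zero]
  intro z hz
  have proj : ∀ {Q : Type} [AddCommGroup Q] [Module A Q] [Module.Flat A Q] (f : E × P →ₗ[A] Q),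
      f.rTensor X z = 0 := by
    intro Q _ _ _ f
    apply Module.Flat.lTensor_preserves_injective_linearMap (M := Q) u hu
    rw [map_zero, ← LinearMap.comp_apply, LinearMap.lTensor_comp_rTensor,
      ← LinearMap.rTensor_comp_lTensor, LinearMap.comp_apply, hz, map_zero]
  have hid : (LinearMap.inl A E P).comp (LinearMap.fst A E P) +
      (LinearMap.inr A E P).comp (LinearMap.snd A E P) = LinearMap.id := by
    ext <;> simp
  have h := LinearMap.congr_fun (congrArg (LinearMap.rTensor X) hid) z
  rw [LinearMap.rTensor_add, LinearMap.rTensor_comp, LinearMap.rTensor_comp, LinearMap.add_apply,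
    LinearMap.comp_apply, LinearMap.comp_apply, proj, proj, map_zero, map_zero, add_zero,
    LinearMap.rTensor_id, LinearMap.id_apply] at h
  exact h.symm

/-! ### The characteristic sequence of a `ℤ[t,t⁻¹]`-module -/

section CharSeq

variable (M : Type) [AddCommGroup M] [Module (LaurentPolynomial ℤ) M]

open LaurentPolynomial

/-- The action map `ℤ[t,t⁻¹] ⊗_ℤ M → M`, `a ⊗ m ↦ a m`. -/
noncomputable def actMap : LaurentPolynomial ℤ ⊗[ℤ] M →ₗ[LaurentPolynomial ℤ] M :=
  TensorProduct.AlgebraTensorModule.lift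
    ((LinearMap.lsmul (LaurentPolynomial ℤ) M).restrictScalars₁₂ (LaurentPolynomial ℤ) ℤ)

/-- Multiplication by `t` on `M`, as a `ℤ`-linear map. -/
noncomputable def tMul : M →ₗ[ℤ] M :=
  (LinearMap.lsmul (LaurentPolynomial ℤ) M (T 1)).restrictScalars ℤ

/-- The characteristic map `t ⊗ 1 - 1 ⊗ t` on `ℤ[t,t⁻¹] ⊗_ℤ M`. Together with `actMap` it forms the
short exact sequence `0 → ℤ[t,t⁻¹] ⊗_ℤ M → ℤ[t,t⁻¹] ⊗_ℤ M → M → 0`. -/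
noncomputable def charMap :
    LaurentPolynomial ℤ ⊗[ℤ] M →ₗ[LaurentPolynomial ℤ] LaurentPolynomial ℤ ⊗[ℤ] M :=
  (T 1 : LaurentPolynomial ℤ) • LinearMap.id - (tMul M).baseChange (LaurentPolynomial ℤ)

lemma actMap_tmul (a : LaurentPolynomial ℤ) (m : M) : actMap M (a ⊗ₜ m) = a • m := by
  simp [actMap]

lemma charMap_tmul (a : LaurentPolynomial ℤ) (m : M) :
    charMap M (a ⊗ₜ m) = (T 1 * a) ⊗ₜ m - a ⊗ₜ ((T 1 : LaurentPolynomial ℤ) • m) := by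
  simp [charMap, tMul, TensorProduct.smul_tmul']

/-- The coefficient of `tⁿ` in an element of `ℤ[t,t⁻¹] ⊗_ℤ M`, viewed as a Laurent polynomial with
coefficients in `M`. -/
noncomputable def coeffMap (n : ℤ) : LaurentPolynomial ℤ ⊗[ℤ] M →ₗ[ℤ] M :=
  TensorProduct.lift
    { toFun := fun a => a.coeff n • LinearMap.id
      map_add' := fun a b => LinearMap.ext fun m => add_smul (a.coeff n) (b.coeff n) m
      map_smul' := fun a b => LinearMap.ext fun m => mul_smul a (b.coeff n) m }

lemma coeffMap_tmul (n : ℤ) (a : LaurentPolynomial ℤ) (m : M) :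
    coeffMap M n (a ⊗ₜ m) = a.coeff n • m := rfl

lemma coeff_T_mul (a : LaurentPolynomial ℤ) (n : ℤ) : (T 1 * a).coeff (n + 1) = a.coeff n := by
  induction a using LaurentPolynomial.induction_on' with
  | add p q hp hq => rw [mul_add, AddMonoidAlgebra.coeff_add, AddMonoidAlgebra.coeff_add, Finsupp.add_apply,
      Finsupp.add_apply, hp, hq]
  | C_mul_T m r =>
    rw [mul_left_comm, ← T_add, ← single_eq_C_mul_T, ← single_eq_C_mul_T]
    rw [AddMonoidAlgebra.coeff_single, AddMonoidAlgebra.coeff_single, Finsupp.single_apply,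
      Finsupp.single_apply]
    simp only [add_comm 1 m, add_left_inj]

lemma coeffMap_charMap (n : ℤ) (x : LaurentPolynomial ℤ ⊗[ℤ] M) :
    coeffMap M (n + 1) (charMap M x) =
      coeffMap M n x - (T 1 : LaurentPolynomial ℤ) • coeffMap M (n + 1) x := by
  induction x with
  | zero => simp
  | add x y hx hy => simp only [map_add, hx, hy, smul_add]; abel
  | tmul a m =>
    rw [charMap_tmul, map_sub, coeffMap_tmul, coeffMap_tmul, coeffMap_tmul, coeffMap_tmul,
      coeff_T_mul, smul_comm]

lemma eq_sum_coeffMap (x : LaurentPolynomial ℤ ⊗[ℤ] M) :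
    ∃ s : Finset ℤ, (∀ n ∉ s, coeffMap M n x = 0) ∧
      x = ∑ n ∈ s, (T n : LaurentPolynomial ℤ) ⊗ₜ[ℤ] coeffMap M n x := by
  induction x with
  | zero => exact ⟨∅, by simp, by simp⟩
  | add x y hx hy =>
    obtain ⟨s, hs, hs'⟩ := hx
    obtain ⟨t, ht, ht'⟩ := hy
    refine ⟨s ∪ t, fun n hn => ?_, ?_⟩
    · rw [Finset.notMem_union] at hn
      rw [map_add, hs n hn.1, ht n hn.2, add_zero]
    · simp only [map_add, TensorProduct.tmul_add, Finset.sum_add_distrib]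
      rw [← Finset.sum_subset (Finset.subset_union_left (s₁ := s) (s₂ := t)) fun n _ hn => by
          rw [hs n hn, TensorProduct.tmul_zero],
        ← Finset.sum_subset (Finset.subset_union_right (s₁ := s) (s₂ := t)) fun n _ hn => by
          rw [ht n hn, TensorProduct.tmul_zero], ← hs', ← ht']
  | tmul a m =>
    refine ⟨a.coeff.support, fun n hn => ?_, ?_⟩
    · rw [coeffMap_tmul, Finsupp.notMem_support_iff.1 hn, zero_smul]
    · simp only [coeffMap_tmul, ← TensorProduct.smul_tmul]
      rw [← TensorProduct.sum_tmul]
      congr 1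
      simp only [smul_eq_C_mul, ← single_eq_C_mul_T]
      exact (AddMonoidAlgebra.sum_coeff_single a).symm

/-- An element killed by `t ⊗ 1 - 1 ⊗ t` has coefficients with `cₙ = t cₙ₊₁`. Since `cₙ = 0` for
large `n`, all coefficients vanish. -/
lemma charMap_injective : Function.Injective (charMap M) := by
  rw [injective_iff_map_eq_zero]
  intro x hx
  obtain ⟨s, hs, hsum⟩ := eq_sum_coeffMap M x
  have step : ∀ n, coeffMap M n x = (T 1 : LaurentPolynomial ℤ) • coeffMap M (n + 1) x := by
    intro n
    have := coeffMap_charMap M n x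
    rw [hx, map_zero] at this
    exact (sub_eq_zero.mp this.symm)
  obtain ⟨b, hb⟩ := s.bddAbove
  have up : ∀ (k : ℕ) (n : ℤ), b < n + k → coeffMap M n x = 0 := by
    intro k
    induction k with
    | zero =>
      intro n hn
      exact hs n fun h => by have := hb h; simp at hn; omega
    | succ k ih =>
      intro n hn
      rw [step, ih (n + 1) (by push_cast at hn; omega), smul_zero]
  rw [hsum]
  refine Finset.sum_eq_zero fun n _ => ?_
  rw [up (b - n + 1).toNat n (by omega), TensorProduct.tmul_zero]

/-- Modulo the range of `t ⊗ 1 - 1 ⊗ t`, scalars move across the tensor sign: this property of `a` is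
closed under sums and products, and holds for integers, `t` and `t⁻¹`. -/
lemma tmul_sub_mem (a : LaurentPolynomial ℤ) : ∀ m : M,
    a ⊗ₜ[ℤ] m - 1 ⊗ₜ[ℤ] (a • m) ∈ LinearMap.range (charMap M) := by
  have hT : ∀ m : M, (T 1 : LaurentPolynomial ℤ) ⊗ₜ[ℤ] m - 1 ⊗ₜ[ℤ] ((T 1 : LaurentPolynomial ℤ) • m)
      ∈ LinearMap.range (charMap M) := fun m => ⟨1 ⊗ₜ m, by rw [charMap_tmul, mul_one]⟩
  have hmul : ∀ a b : LaurentPolynomial ℤ,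
      (∀ m : M, a ⊗ₜ[ℤ] m - 1 ⊗ₜ[ℤ] (a • m) ∈ LinearMap.range (charMap M)) →
      (∀ m : M, b ⊗ₜ[ℤ] m - 1 ⊗ₜ[ℤ] (b • m) ∈ LinearMap.range (charMap M)) →
      (∀ m : M, (a * b) ⊗ₜ[ℤ] m - 1 ⊗ₜ[ℤ] ((a * b) • m) ∈ LinearMap.range (charMap M)) := by
    intro a b ha hb m
    have := add_mem (Submodule.smul_mem _ a (hb m)) (ha (b • m))
    convert this using 1
    rw [smul_sub, TensorProduct.smul_tmul', TensorProduct.smul_tmul', smul_eq_mul, smul_eq_mul,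
      mul_one, mul_smul]
    abel
  have hTi : ∀ m : M, (T (-1) : LaurentPolynomial ℤ) ⊗ₜ[ℤ] m -
      1 ⊗ₜ[ℤ] ((T (-1) : LaurentPolynomial ℤ) • m) ∈ LinearMap.range (charMap M) := by
    intro m
    have := neg_mem (Submodule.smul_mem _ (T (-1) : LaurentPolynomial ℤ)
      (hT ((T (-1) : LaurentPolynomial ℤ) • m)))
    convert this using 1
    rw [smul_sub, TensorProduct.smul_tmul', TensorProduct.smul_tmul', smul_eq_mul, smul_eq_mul,
      mul_one, ← T_add, smul_smul, ← T_add]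
    simp
  induction a using LaurentPolynomial.induction_on with
  | h_C a =>
    intro m
    have : (C a : LaurentPolynomial ℤ) = a • 1 := by rw [smul_eq_C_mul, mul_one]
    rw [this, TensorProduct.smul_tmul, smul_assoc, one_smul, sub_self]
    exact zero_mem _
  | h_add ha hb =>
    intro m
    rw [TensorProduct.add_tmul, add_smul, TensorProduct.tmul_add, add_sub_add_comm]
    exact add_mem (ha m) (hb m)
  | h_C_mul_T n a h =>
    rw [T_add, ← mul_assoc]
    exact hmul _ _ h hT
  | h_C_mul_T_Z n a h =>
    rw [sub_eq_add_neg, T_add, ← mul_assoc]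
    exact hmul _ _ h hTi

lemma ker_actMap_le (x : LaurentPolynomial ℤ ⊗[ℤ] M) (hx : actMap M x = 0) :
    ∃ y, charMap M y = x := by
  have key : x - 1 ⊗ₜ[ℤ] actMap M x ∈ LinearMap.range (charMap M) := by
    clear hx
    induction x with
    | zero => simp
    | add x y hx hy =>
      rw [map_add, TensorProduct.tmul_add, add_sub_add_comm]
      exact add_mem hx hy
    | tmul a m => rw [actMap_tmul]; exact tmul_sub_mem M a m
  rwa [hx, TensorProduct.tmul_zero, sub_zero] at key

lemma actMap_charMap (x : LaurentPolynomial ℤ ⊗[ℤ] M) : actMap M (charMap M x) = 0 := by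
  induction x with
  | zero => simp
  | add x y hx hy => rw [map_add, map_add, hx, hy, add_zero]
  | tmul a m => rw [charMap_tmul, map_sub, actMap_tmul, actMap_tmul, smul_smul, mul_comm, sub_self]

/-- A `ℤ`-torsion free `M` has flat dimension at most one over `ℤ[t,t⁻¹]`. With `s` a lift of `p` to
`ℤ[t,t⁻¹] ⊗_ℤ M`, the kernel of `p` is identified with the kernel of the surjection
`s + charMap : F × (ℤ[t,t⁻¹] ⊗_ℤ M) → ℤ[t,t⁻¹] ⊗_ℤ M` between flat modules. -/
lemma flat_ker_of_surjective (hMfree : ∀ (k : ℤ) (x : M), k ≠ 0 → k • x = 0 → x = 0)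
    {F : Type} [AddCommGroup F] [Module (LaurentPolynomial ℤ) F]
    [Module.Projective (LaurentPolynomial ℤ) F] (p : F →ₗ[LaurentPolynomial ℤ] M)
    (hp : Function.Surjective p) : Module.Flat (LaurentPolynomial ℤ) (LinearMap.ker p) := by
  -- Flat and torsion free agree over the Dedekind domain `ℤ`.
  have : Module.Flat ℤ M := by
    rw [IsDedekindDomain.flat_iff_torsion_eq_bot, eq_bot_iff]
    rintro m ⟨⟨r, hr⟩, h⟩
    exact hMfree r m (nonZeroDivisors.ne_zero hr) h
  have hact : Function.Surjective (actMap M) := fun m => ⟨1 ⊗ₜ m, by simp [actMap_tmul]⟩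
  obtain ⟨s, hs⟩ := Module.projective_lifting_property (actMap M) p hact
  have hs' : ∀ x, actMap M (s x) = p x := fun x => LinearMap.congr_fun hs x
  let ψ := s.coprod (charMap M)
  have hψ : Function.Surjective ψ := by
    intro z
    obtain ⟨x, hx⟩ := hp (actMap M z)
    obtain ⟨y, hy⟩ := ker_actMap_le M (z - s x) (by rw [map_sub, hs', hx, sub_self])
    exact ⟨(x, y), by simp [ψ, hy]⟩
  have := flat_prod (A := LaurentPolynomial ℤ) (E := F) (P := LaurentPolynomial ℤ ⊗[ℤ] M)
  have := flat_ker ψ hψ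
  have hmem : ∀ z : LinearMap.ker ψ, z.1.1 ∈ LinearMap.ker p := by
    rintro ⟨⟨x, y⟩, h⟩
    have h : s x + charMap M y = 0 := h
    have := congrArg (actMap M) h
    rwa [map_add, hs', actMap_charMap, add_zero, map_zero] at this
  let φ : LinearMap.ker ψ →ₗ[LaurentPolynomial ℤ] LinearMap.ker p :=
    ((LinearMap.fst _ _ _).comp (LinearMap.ker ψ).subtype).codRestrict _ hmem
  have hφ : Function.Bijective φ := by
    constructor
    · rw [injective_iff_map_eq_zero]
      rintro ⟨⟨x, y⟩, h⟩ h0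
      have h : s x + charMap M y = 0 := h
      obtain rfl : x = 0 := congrArg Subtype.val h0
      rw [map_zero, zero_add] at h
      obtain rfl := (injective_iff_map_eq_zero _).1 (charMap_injective M) y h
      rfl
    · rintro ⟨x, hx⟩
      obtain ⟨y, hy⟩ := ker_actMap_le M (- s x) (by rw [map_neg, hs', hx, neg_zero])
      exact ⟨⟨(x, y), by simp [ψ, hy]⟩, rfl⟩
  exact Module.Flat.of_linearEquiv (LinearEquiv.ofBijective φ hφ).symm

end CharSeq

/-! ### Extending maps into divisible modules -/

/-- If `f = q g` on `ker p`, then `x ↦ g (q x)` extends `f` to `F`, because `q F ⊆ ker p`. -/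
lemma extend_of_projective_ker {A : Type} [CommRing A] {F M N : Type} [AddCommGroup F]
    [AddCommGroup M] [AddCommGroup N] [Module A F] [Module A M] [Module A N]
    (p : F →ₗ[A] M) [Module.Projective A (LinearMap.ker p)] (q : A) (hM : ∀ x : M, q • x = 0)
    (hN : ∀ x : N, ∃ y : N, q • y = x) (f : LinearMap.ker p →ₗ[A] N) :
    ∃ g : F →ₗ[A] N, ∀ x, g x.1 = f x := by
  obtain ⟨g, hg⟩ := Module.projective_lifting_property (LinearMap.lsmul A N q) f hN
  have hmem : ∀ x : F, (LinearMap.lsmul A F q) x ∈ LinearMap.ker p := by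
    intro x; simp [hM]
  refine ⟨g.comp ((LinearMap.lsmul A F q).codRestrict _ hmem), fun x => ?_⟩
  rw [← hg]
  have : (LinearMap.lsmul A F q).codRestrict _ hmem x.1 = q • x := rfl
  simp [this]

instance : IsNoetherianRing (LaurentPolynomial ℤ) :=
  IsLocalization.isNoetherianRing (.powers (Polynomial.X : Polynomial ℤ)) _ inferInstance

/-- The vanishing of `Ext¹` in terms of a surjection `e : P → R ⊗ M` from a projective module: every map
`ker e → N` extends to `P`. -/
theorem extend_tensor (M : Type) [AddCommGroup M] [Module (LaurentPolynomial ℤ) M]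
    [Module.Finite (LaurentPolynomial ℤ) M]
    (hMfree : ∀ (k : ℤ) (x : M), k ≠ 0 → k • x = 0 → x = 0)
    (q : LaurentPolynomial ℤ) (hann : ∀ x : M, q • x = 0)
    (R : Type) [CommRing R] [Algebra (LaurentPolynomial ℤ) R]
    (N : Type) [AddCommGroup N] [Module R N]
    (hN : ∀ x : N, ∃ y : N, algebraMap (LaurentPolynomial ℤ) R q • y = x)
    (P : Type) [AddCommGroup P] [Module R P] [Module.Projective R P]
    (e : P →ₗ[R] R ⊗[LaurentPolynomial ℤ] M) (he : Function.Surjective e)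
    (f : LinearMap.ker e →ₗ[R] N) : ∃ g : P →ₗ[R] N, ∀ x, g x.1 = f x := by
  let _ : Module (LaurentPolynomial ℤ) N := Module.compHom N (algebraMap (LaurentPolynomial ℤ) R)
  let _ : Module (LaurentPolynomial ℤ) P := Module.compHom P (algebraMap (LaurentPolynomial ℤ) R)
  have : IsScalarTower (LaurentPolynomial ℤ) R N := .of_algebraMap_smul fun _ _ => rfl
  have : IsScalarTower (LaurentPolynomial ℤ) R P := .of_algebraMap_smul fun _ _ => rfl
  obtain ⟨n, p, hp⟩ := Module.Finite.exists_fin' (LaurentPolynomial ℤ) M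
  have hflat := flat_ker_of_surjective M hMfree p hp
  have : Module.FinitePresentation (LaurentPolynomial ℤ) (LinearMap.ker p) :=
    Module.finitePresentation_of_finite _ _
  have : Module.Projective (LaurentPolynomial ℤ) (LinearMap.ker p) :=
    Module.Flat.projective_of_finitePresentation
  -- `α` and `β` compare the presentation `e` with the base change of `p`.
  obtain ⟨α, hα⟩ := Module.projective_lifting_property (e.restrictScalars (LaurentPolynomial ℤ))
    ((TensorProduct.mk (LaurentPolynomial ℤ) R M 1).comp p) he
  have hα' : ∀ x, e (α x) = 1 ⊗ₜ p x := fun x => LinearMap.congr_fun hα x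
  have hpR : Function.Surjective (p.baseChange R) := LinearMap.lTensor_surjective R hp
  obtain ⟨β, hβ⟩ := Module.projective_lifting_property (p.baseChange R) e hpR
  have hβ' : ∀ x, p.baseChange R (β x) = e x := fun x => LinearMap.congr_fun hβ x
  have hmem : ∀ x : LinearMap.ker p, (α.comp (LinearMap.ker p).subtype) x ∈
      (LinearMap.ker e).restrictScalars (LaurentPolynomial ℤ) := by
    rintro ⟨x, hx⟩
    have hx : p x = 0 := hx
    simp [hα', hx]
  obtain ⟨h, hh⟩ := extend_of_projective_ker p q hann (N := N) hN
    ((f.restrictScalars (LaurentPolynomial ℤ)).comp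
      ((α.comp (LinearMap.ker p).subtype).codRestrict _ hmem))
  let αR : R ⊗[LaurentPolynomial ℤ] (Fin n → LaurentPolynomial ℤ) →ₗ[R] P := α.liftBaseChange R
  let hR : R ⊗[LaurentPolynomial ℤ] (Fin n → LaurentPolynomial ℤ) →ₗ[R] N := h.liftBaseChange R
  have hαR : ∀ z, e (αR z) = p.baseChange R z := by
    intro z
    induction z with
    | zero => simp
    | add x y hx hy => simp only [map_add, hx, hy]
    | tmul r x => simp [αR, hα', TensorProduct.smul_tmul']
  have hagree : ∀ z (hz : p.baseChange R z = 0),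
      hR z = f ⟨αR z, by rw [LinearMap.mem_ker, hαR, hz]⟩ := by
    intro z hz
    have hex := lTensor_exact R (LinearMap.exact_subtype_ker_map p) hp
    -- Right exactness: `ker (R ⊗ p)` is the image of `R ⊗ ker p`.
    obtain ⟨w, rfl⟩ := (hex z).1 hz
    have : ∀ w : R ⊗[LaurentPolynomial ℤ] LinearMap.ker p,
        ∃ hm : αR ((LinearMap.ker p).subtype.lTensor R w) ∈ LinearMap.ker e,
        hR ((LinearMap.ker p).subtype.lTensor R w) = f ⟨_, hm⟩ := by
      intro w
      induction w with
      | zero => exact ⟨by simp, by simp; exact (map_zero f).symm⟩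
      | add x y hx hy =>
        obtain ⟨hx, hx'⟩ := hx
        obtain ⟨hy, hy'⟩ := hy
        refine ⟨by simpa using add_mem hx hy, ?_⟩
        simp only [map_add, hx', hy']
        exact (map_add f _ _).symm
      | tmul r x =>
        refine ⟨by simp [αR, hα'], ?_⟩
        simp only [LinearMap.lTensor_tmul, hR, αR, LinearMap.liftBaseChange_tmul]
        have := hh x
        simp only [Submodule.subtype_apply]
        rw [this]
        exact (map_smul f r _).symm
    exact (this w).2
  -- `hR ∘ β` restricts to `f ∘ αR ∘ β` on `ker e`; since `αR ∘ β - id` takes values in `ker e`,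
  -- the discrepancy with `f` extends to `P`.
  have hmem2 : ∀ x, (αR.comp β - (LinearMap.id : P →ₗ[R] P)) x ∈ LinearMap.ker e := by
    intro x
    simp [hαR, hβ']
  refine ⟨hR.comp β - f.comp ((αR.comp β - (LinearMap.id : P →ₗ[R] P)).codRestrict _ hmem2), fun x => ?_⟩
  have hz : p.baseChange R (β x.1) = 0 := by rw [hβ']; exact x.2
  rw [LinearMap.sub_apply, LinearMap.comp_apply, hagree _ hz, LinearMap.comp_apply, ← map_sub]
  congr 1
  ext
  simp

/-! ### Vanishing of `Ext¹` -/

/-- Let `M` be a finitely generated `ℤ[t,t⁻¹]`-module that is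
`ℤ`-torsion free and annihilated by some `q ∈ Ξ`, and let `R` be a `ℤ[t,t⁻¹]`-algebra
with no `Ξ`-torsion. Then for every `Ξ`-divisible `R`-module `N`,
`Ext¹_R(M ⊗_{ℤ[t,t⁻¹]} R, N) = 0`. -/
theorem stmt14 (M : Type) [AddCommGroup M] [Module (LaurentPolynomial ℤ) M]
    [Module.Finite (LaurentPolynomial ℤ) M]
    (hMfree : ∀ (k : ℤ) (x : M), k ≠ 0 → k • x = 0 → x = 0)
    (q : LaurentPolynomial ℤ) (hq : q ∈ Xi) (hann : ∀ x : M, q • x = 0)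
    (R : Type) [CommRing R] [Algebra (LaurentPolynomial ℤ) R]
    (hR : ∀ p ∈ Xi, ∀ r : R, algebraMap (LaurentPolynomial ℤ) R p * r = 0 → r = 0)
    (N : Type) [AddCommGroup N] [Module R N]
    (hN : ∀ x : N, ∀ p ∈ Xi, ∃ y : N, algebraMap (LaurentPolynomial ℤ) R p • y = x) :
    Limits.IsZero
      (((Ext R (ModuleCat R) 1).obj
          (Opposite.op (ModuleCat.of R (R ⊗[LaurentPolynomial ℤ] M)))).obj
        (ModuleCat.of R N)) := by
  let Pr : ProjectiveResolution (ModuleCat.of R (R ⊗[LaurentPolynomial ℤ] M)) :=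
    ProjectiveResolution.of _
  refine Limits.IsZero.of_iso ?_ (Pr.isoExt 1 (ModuleCat.of R N))
  rw [← HomologicalComplex.exactAt_iff_isZero_homology,
    HomologicalComplex.exactAt_iff' _ 0 1 2 (by simp) (by simp),
    ShortComplex.moduleCat_exact_iff]
  intro (φ : Pr.complex.X 1 ⟶ ModuleCat.of R N) (hφ : Pr.complex.d 2 1 ≫ φ = 0)
  have hsurj : Function.Surjective (Pr.π.f 0).hom := (ModuleCat.epi_iff_surjective _).1 inferInstance
  have hex1 := (ShortComplex.moduleCat_exact_iff _).1 (Pr.exact_succ 0)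
  have hex0 := (ShortComplex.moduleCat_exact_iff _).1 Pr.exact₀
  suffices ∃ g : Pr.complex.X 0 ⟶ ModuleCat.of R N, Pr.complex.d 1 0 ≫ g = φ from this
  have : Module.Projective R (Pr.complex.X 0) :=
    (IsProjective.iff_projective _).2 (Pr.projective 0)
  have hext := extend_tensor M hMfree q hann R N (fun x => hN x q hq) (Pr.complex.X 0)
    (Pr.π.f 0).hom hsurj
  -- `φ` vanishes on `ker d₁`, so it descends to `ker (P₀ → R ⊗ M) = range d₁`.
  have hker : ∀ x, (Pr.complex.d 1 0).hom x = 0 → φ.hom x = 0 := by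
    intro x hx
    obtain ⟨y, rfl⟩ := hex1 x hx
    exact LinearMap.congr_fun (congrArg ModuleCat.Hom.hom hφ) y
  let d : Pr.complex.X 1 →ₗ[R] LinearMap.ker (Pr.π.f 0).hom :=
    (Pr.complex.d 1 0).hom.codRestrict _ fun x =>
      LinearMap.congr_fun (congrArg ModuleCat.Hom.hom Pr.complex_d_comp_π_f_zero) x
  have hd : Function.Surjective d := by
    rintro ⟨x, hx⟩
    obtain ⟨y, hy⟩ := hex0 x hx
    exact ⟨y, Subtype.ext hy⟩
  have hdker : LinearMap.ker d ≤ LinearMap.ker φ.hom := fun x hx =>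
    hker x (congrArg Subtype.val hx)
  let f : LinearMap.ker (Pr.π.f 0).hom →ₗ[R] N :=
    ((LinearMap.ker d).liftQ φ.hom hdker).comp (d.quotKerEquivOfSurjective hd).symm.toLinearMap
  have hf : ∀ x, f (d x) = φ.hom x := by
    intro x
    have : (d.quotKerEquivOfSurjective hd).symm (d x) = (LinearMap.ker d).mkQ x := by
      rw [LinearEquiv.symm_apply_eq]; rfl
    simp only [f, LinearMap.comp_apply, LinearEquiv.coe_coe, this]
    rfl
  obtain ⟨g, hg⟩ := hext f
  refine ⟨ModuleCat.ofHom g, ?_⟩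
  ext x
  exact (hg (d x)).trans (hf x)
end

section
/- Let M be a finitely generated ℤ-torsion-free ℤ[t,t⁻¹]-module on which multiplication by 1−t is an automorphism. Then M has homological dimension 1, i.e., there is a short exact sequence 0 → ℤ[t,t⁻¹]ⁿ → ℤ[t,t⁻¹]ᵐ → M → 0 for some natural numbers n, m. -/
/-!
Put `u = 1 - t`. By Nakayama's lemma (the determinant trick), `u M = M` forces some element
`1 - u h` to kill `M`, so `h` acts as `u⁻¹`. Clearing denominators, `M` is killed by `q(u)` with
`q ∈ ℤ[X]` and `q(0) = 1`; the reverse of `q` is monic and kills `h`, so `h` acts integrally over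
`ℤ`. Hence `M` contains a finitely generated subgroup `L`, stable under `h`, that generates `M` over
`ℤ[t,t⁻¹]`. As `M` has no `ℤ`-torsion, `L ≅ ℤʳ`, and `h` acts on `L` by an integer matrix `A`.

The cokernel `N` of `1 - u A` on `ℤ[t,t⁻¹]ʳ` is then `M`. The determinant is `1` at `t = 1`, so
the matrix is injective. In `N` every lattice vector `y` equals `u A y`, so the elements
`u ^ d y` with `y ∈ ℤʳ` form a subgroup stable under `t`; thus every element of `N` is such an
element up to a power of `t`. Since `u` is injective on `M` and `ℤʳ ≅ L ⊆ M`, the map `N → M` is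
injective.
-/

open LaurentPolynomial in
/-- The inverse of multiplication by `1 - t` is multiplication by some `h ∈ ℤ[t,t⁻¹]` whose class
modulo the annihilator of `M` is integral over `ℤ`: clearing denominators in `1 - (1 - t) h` gives
a relation `q(1 - t) = 0` with `q ∈ ℤ[X]` and `q(0) = 1`, so the reverse of `q` is monic and
kills `h = (1 - t)⁻¹`. -/
theorem exists_integral_inverse (M : Type) [AddCommGroup M] [Module (LaurentPolynomial ℤ) M]
    [Module.Finite (LaurentPolynomial ℤ) M]
    (hsurj : Function.Surjective
      (fun x : M => ((1 : LaurentPolynomial ℤ) - LaurentPolynomial.T 1) • x)) :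
    ∃ h : LaurentPolynomial ℤ,
      (∀ x : M, ((1 : LaurentPolynomial ℤ) - LaurentPolynomial.T 1) • h • x = x) ∧
      IsIntegral ℤ (Ideal.Quotient.mk (Module.annihilator (LaurentPolynomial ℤ) M) h) := by
  set u : LaurentPolynomial ℤ := 1 - T 1 with hu
  obtain ⟨r, hr, hrM⟩ := Submodule.exists_sub_one_mem_and_smul_eq_zero_of_fg_of_le_smul
    (Ideal.span {u}) (⊤ : Submodule (LaurentPolynomial ℤ) M) Module.Finite.fg_top (by
      intro x _
      obtain ⟨y, rfl⟩ := hsurj x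
      exact Submodule.smul_mem_smul (Ideal.mem_span_singleton_self u) trivial)
  obtain ⟨k, hk⟩ := Ideal.mem_span_singleton'.1 hr
  have hmul : ∀ x : M, (u * -k) • x = x := by
    intro x
    have h0 : (u * -k) = 1 - r := by linear_combination -hk
    rw [h0, sub_smul, hrM x trivial, one_smul, sub_zero]
  refine ⟨-k, fun x => by rw [smul_smul, hmul], ?_⟩
  set π := Ideal.Quotient.mk (Module.annihilator (LaurentPolynomial ℤ) M) with hπ
  have hinv : π u * π (-k) = 1 := by
    rw [← map_mul, ← map_one π, hπ, Ideal.Quotient.mk_eq_mk_iff_sub_mem, Module.mem_annihilator]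
    intro x
    rw [sub_smul, hmul, one_smul, sub_self]
  obtain ⟨a, p, hp⟩ := exists_T_pow (-k)
  let q : Polynomial ℤ := (1 - Polynomial.X) ^ a - Polynomial.X * p.comp (1 - Polynomial.X)
  have hq0 : q.coeff 0 = 1 := by
    simp [q, Polynomial.coeff_zero_eq_eval_zero]
  have haev : ∀ s : Polynomial ℤ,
      Polynomial.aeval (T 1 : LaurentPolynomial ℤ) s = Polynomial.toLaurent s := by
    intro s
    rw [← Polynomial.toLaurent_X, ← Polynomial.coe_toLaurentAlg, Polynomial.aeval_algHom_apply,
      Polynomial.aeval_X_left_apply]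
  have hqu : Polynomial.aeval u q = T a * (1 - u * -k) := by
    have h1 : (1 : LaurentPolynomial ℤ) - u = T 1 := by simp [hu]
    simp only [q, map_sub, map_pow, map_mul, map_one, Polynomial.aeval_X, Polynomial.aeval_comp,
      h1, haev, hp, T_pow]
    simp only [mul_one]
    ring
  have hq : Polynomial.aeval (π u) q = 0 := by
    have h2 : Polynomial.aeval (π u) q = π (Polynomial.aeval u q) :=
      Polynomial.aeval_algHom_apply π.toIntAlgHom u q
    rw [h2, hqu, map_mul, map_sub, map_mul, hinv, map_one, sub_self, mul_zero]
  have hmonic : q.reverse.Monic := by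
    rw [Polynomial.Monic, Polynomial.reverse_leadingCoeff, Polynomial.trailingCoeff,
      Polynomial.natTrailingDegree_eq_zero_of_constantCoeff_ne_zero, hq0]
    simp [hq0]
  refine ⟨q.reverse, hmonic, ?_⟩
  let : Invertible (π u) := ⟨π (-k), by rw [mul_comm, hinv], hinv⟩
  exact (Polynomial.eval₂_reverse_eq_zero_iff (algebraMap ℤ _) (π u) q).2 hq

/-- If `h` acts integrally over `ℤ`, then a finitely generated module contains a finitely generated
additive subgroup that is stable under `h` and generates the module. -/
theorem exists_stable_lattice (M : Type) [AddCommGroup M] [Module (LaurentPolynomial ℤ) M]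
    [Module.Finite (LaurentPolynomial ℤ) M] (h : LaurentPolynomial ℤ)
    (hint : IsIntegral ℤ (Ideal.Quotient.mk (Module.annihilator (LaurentPolynomial ℤ) M) h)) :
    ∃ L : Submodule ℤ M, L.FG ∧ (∀ x ∈ L, h • x ∈ L) ∧
      Submodule.span (LaurentPolynomial ℤ) (L : Set M) = ⊤ := by
  let := Module.quotientAnnihilator (R := LaurentPolynomial ℤ) (M := M)
  set hb := Ideal.Quotient.mk (Module.annihilator (LaurentPolynomial ℤ) M) h
  let B := Algebra.adjoin ℤ {hb}
  have : Module.Finite ℤ B := Module.Finite.iff_fg.2 hint.fg_adjoin_singleton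
  obtain ⟨s, hs⟩ := (Module.Finite.fg_top : (⊤ : Submodule (LaurentPolynomial ℤ) M).FG)
  let N : Submodule B M := Submodule.span B (s : Set M)
  have : Module.Finite B N := Module.Finite.iff_fg.2 ⟨s, rfl⟩
  have : Module.Finite ℤ N := Module.Finite.trans B N
  refine ⟨N.restrictScalars ℤ, Module.Finite.iff_fg.1 this, fun x hx => ?_, ?_⟩
  · exact N.smul_mem ⟨hb, Algebra.subset_adjoin rfl⟩ hx
  · exact top_unique (hs ▸ Submodule.span_mono Submodule.subset_span)

/-- A lattice stable under the inverse `h` of `1 - t`, with `A` the matrix of `h`, gives the square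
presentation with relation matrix `1 - (1 - t) A`. -/
theorem exists_presentation (M : Type) [AddCommGroup M] [Module (LaurentPolynomial ℤ) M]
    (h : LaurentPolynomial ℤ)
    (hinv : ∀ x : M, ((1 : LaurentPolynomial ℤ) - LaurentPolynomial.T 1) • h • x = x)
    (L : Submodule ℤ M) (hL : ∀ x ∈ L, h • x ∈ L)
    (hspan : Submodule.span (LaurentPolynomial ℤ) (L : Set M) = ⊤)
    {r : ℕ} (b : Module.Basis (Fin r) ℤ L) :
    ∃ (f : (Fin r → LaurentPolynomial ℤ) →ₗ[LaurentPolynomial ℤ] (Fin r → LaurentPolynomial ℤ))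
      (g : (Fin r → LaurentPolynomial ℤ) →ₗ[LaurentPolynomial ℤ] M),
      Function.Injective f ∧ Function.Surjective g ∧ LinearMap.ker g = LinearMap.range f := by
  set u : LaurentPolynomial ℤ := 1 - LaurentPolynomial.T 1 with hu
  let σ : L →ₗ[ℤ] L :=
    ((Module.toAddMonoidEnd (LaurentPolynomial ℤ) M h).toIntLinearMap).restrict hL
  have hσ : ∀ x : L, ((σ x : L) : M) = h • (x : M) := fun x => rfl
  let A : Matrix (Fin r) (Fin r) ℤ := LinearMap.toMatrix b b σ
  let F : Matrix (Fin r) (Fin r) (LaurentPolynomial ℤ) := 1 - u • A.map LaurentPolynomial.C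
  -- the inclusion of `ℤʳ` into `ℤ[t,t⁻¹]ʳ` as the constant vectors
  let ι : (Fin r → ℤ) →+ (Fin r → LaurentPolynomial ℤ) :=
    (LaurentPolynomial.C : ℤ →+* LaurentPolynomial ℤ).toAddMonoidHom.compLeft (Fin r)
  have hι : ∀ y i, ι y i = LaurentPolynomial.C (y i) := fun y i => rfl
  have hF : ∀ y, F.mulVec (ι y) = ι y - u • ι (A.mulVec y) := by
    intro y
    have h1 : (A.map LaurentPolynomial.C).mulVec (ι y) = ι (A.mulVec y) := by
      ext1 i
      simp [hι, Matrix.mulVec, dotProduct]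
    rw [Matrix.sub_mulVec, Matrix.one_mulVec, Matrix.smul_mulVec, h1]
  let g : (Fin r → LaurentPolynomial ℤ) →ₗ[LaurentPolynomial ℤ] M :=
    Fintype.linearCombination (LaurentPolynomial ℤ) (fun i => (b i : M))
  have hg : ∀ y, g (ι y) = (b.equivFun.symm y : L) := by
    intro y
    simp [g, Fintype.linearCombination_apply, Module.Basis.equivFun_symm_apply, hι, Int.cast_smul_eq_zsmul]
  have hgA : ∀ y, g (ι (A.mulVec y)) = h • g (ι y) := by
    intro y
    rw [hg, hg, ← hσ]
    congr 1
    apply b.equivFun.injective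
    rw [LinearEquiv.apply_symm_apply]
    have := LinearMap.toMatrix_mulVec_repr b b σ (b.equivFun.symm y)
    rw [Module.Basis.equivFun_apply, ← this]
    congr 1
    exact (b.equivFun.apply_symm_apply y).symm
  have hgF : ∀ y, g (F.mulVec (ι y)) = 0 := by
    intro y
    rw [hF, map_sub, map_smul, hgA, hinv, sub_self]
  let f := F.mulVecLin
  have hgf : ∀ z, g (f z) = 0 := by
    have : g ∘ₗ f = 0 := by
      apply (Pi.basisFun (LaurentPolynomial ℤ) (Fin r)).ext
      intro j
      have h1 : Pi.basisFun (LaurentPolynomial ℤ) (Fin r) j = ι (Pi.single j 1) := by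
        ext1 i
        rw [Pi.basisFun_apply, hι]
        rcases eq_or_ne i j with rfl | hj
        · simp
        · simp [Pi.single_eq_of_ne hj]
      rw [h1]
      exact hgF _
    exact fun z => LinearMap.congr_fun this z
  have hgι : ∀ y, g (ι y) = 0 → y = 0 := by
    intro y hy
    rw [hg] at hy
    exact (LinearEquiv.map_eq_zero_iff _).1 (Subtype.ext hy)
  have hu0 : ∀ (d : ℕ) (x : M), u ^ d • x = 0 → x = 0 := by
    intro d x hx
    have h1 : ∀ x : M, (u * h) • x = x := fun x => by rw [mul_smul, hinv]
    have h2 : ∀ (d : ℕ) (x : M), (u * h) ^ d • x = x := by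
      intro d x
      induction d with
      | zero => simp
      | succ d ih => rw [pow_succ, mul_smul, h1, ih]
    rw [← h2 d x, mul_pow, mul_comm, mul_smul, hx, smul_zero]
  refine ⟨f, g, ?_, ?_, le_antisymm ?_ ?_⟩
  · apply Matrix.mulVec_injective_of_det_ne_zero
    intro hdet
    -- the augmentation `t ↦ 1` sends the relation matrix to the identity
    let ε : LaurentPolynomial ℤ →+* ℤ := LaurentPolynomial.eval₂ (RingHom.id ℤ) 1
    have hεu : ε u = 0 := by simp [ε, hu, LaurentPolynomial.eval₂_T]
    have hε : ε.mapMatrix F = 1 := by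
      ext i j
      simp [F, hεu, Matrix.one_apply, apply_ite ε]
    have := RingHom.map_det ε F
    rw [hdet, hε] at this
    simp at this
  · rw [← LinearMap.range_eq_top, ← top_le_iff, ← hspan, Submodule.span_le]
    intro x hx
    refine ⟨ι (b.equivFun ⟨x, hx⟩), ?_⟩
    rw [hg, LinearEquiv.symm_apply_apply]
  · intro x hx
    -- Modulo `range f`, lattice vectors satisfy `y ≡ (1 - t) A y`.
    have hstep : ∀ y, ι y - u • ι (A.mulVec y) ∈ LinearMap.range f := fun y => ⟨ι y, hF y⟩
    have hlift : ∀ (e d : ℕ) (y), ∃ y', u ^ d • ι y - u ^ (d + e) • ι y' ∈ LinearMap.range f := by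
      intro e d y
      induction e with
      | zero => exact ⟨y, by simp⟩
      | succ e ih =>
        obtain ⟨y', hy'⟩ := ih
        refine ⟨A.mulVec y', ?_⟩
        have := add_mem hy' (Submodule.smul_mem _ (u ^ (d + e)) (hstep y'))
        convert this using 1
        rw [smul_sub, smul_smul, ← pow_succ, ← add_assoc]
        abel
    -- `P z`: modulo `range f`, `z` is `(1 - t) ^ d` times a constant vector.
    let P : (Fin r → LaurentPolynomial ℤ) → Prop :=
      fun z => ∃ (d : ℕ) (y : _), z - u ^ d • ι y ∈ LinearMap.range f
    have Padd : ∀ z w, P z → P w → P (z + w) := by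
      rintro z w ⟨d, y, hy⟩ ⟨e, y', hy'⟩
      obtain ⟨v, hv⟩ := hlift e d y
      obtain ⟨v', hv'⟩ := hlift d e y'
      refine ⟨d + e, v + v', ?_⟩
      have := add_mem (add_mem hy hv) (add_mem hy' hv')
      convert this using 1
      rw [add_comm e d, map_add, smul_add]
      abel
    have PT : ∀ z, P z → P ((LaurentPolynomial.T 1 : LaurentPolynomial ℤ) • z) := by
      rintro z ⟨d, y, hy⟩
      refine ⟨d + 1, A.mulVec y - y, ?_⟩
      have := add_mem (Submodule.smul_mem _ (LaurentPolynomial.T 1) hy)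
        (Submodule.smul_mem _ (u ^ d) (hstep y))
      convert this using 1
      have hT : (LaurentPolynomial.T 1 : LaurentPolynomial ℤ) = 1 - u := by simp [hu]
      rw [hT, map_sub]
      ext1 i
      simp only [Pi.sub_apply, Pi.add_apply, Pi.smul_apply, smul_eq_mul]
      ring
    have PTn : ∀ (n : ℕ) z, P z → P ((LaurentPolynomial.T n : LaurentPolynomial ℤ) • z) := by
      intro n z hz
      induction n with
      | zero => simpa using hz
      | succ n ih =>
        have := PT _ ih
        rwa [smul_smul, ← LaurentPolynomial.T_add, add_comm] at this
    -- `Q z`: some `t ^ n z` satisfies `P`; this will hold for every vector.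
    let Q : (Fin r → LaurentPolynomial ℤ) → Prop :=
      fun z => ∃ n : ℕ, P ((LaurentPolynomial.T n : LaurentPolynomial ℤ) • z)
    have Qadd : ∀ z w, Q z → Q w → Q (z + w) := by
      rintro z w ⟨n, hn⟩ ⟨m, hm⟩
      refine ⟨n + m, ?_⟩
      have h1 := Padd _ _ (PTn m _ hn) (PTn n _ hm)
      rw [smul_smul, smul_smul, ← LaurentPolynomial.T_add, ← LaurentPolynomial.T_add,
        add_comm (m : ℤ) n, ← smul_add] at h1
      exact_mod_cast h1
    have Pι : ∀ y, P (ι y) := fun y => ⟨0, y, by simp⟩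
    have Qsingle : ∀ (i : Fin r) (p : LaurentPolynomial ℤ), Q (Pi.single i p) := by
      intro i p
      induction p using LaurentPolynomial.induction_on' with
      | add p q hp hq => rw [Pi.single_add]; exact Qadd _ _ hp hq
      | C_mul_T n a =>
        refine ⟨n.natAbs, ?_⟩
        have h1 := PTn (n.natAbs + n).toNat _ (Pι (Pi.single i a))
        convert h1 using 1
        have h2 : ((n.natAbs + n).toNat : ℤ) = n.natAbs + n := by omega
        rw [h2]
        ext1 j
        simp only [Pi.smul_apply, smul_eq_mul, hι, LaurentPolynomial.T_add]
        rcases eq_or_ne j i with rfl | hj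
        · simp only [Pi.single_eq_same]; ring
        · simp only [Pi.single_eq_of_ne hj, map_zero, mul_zero]
    have hQ : Q x := by
      rw [← Finset.univ_sum_single x]
      exact Finset.sum_induction _ Q Qadd ⟨0, by simpa using Pι 0⟩ (fun i _ => Qsingle i _)
    obtain ⟨n, d, y, z, hz⟩ := hQ
    -- `x ∈ ker g` and the injectivity of `1 - t` on `M` force the constant vector to vanish.
    have hy : y = 0 := by
      apply hgι
      apply hu0 d
      have h1 := hgf z
      rw [hz, map_sub, map_smul, map_smul, LinearMap.mem_ker.1 hx, smul_zero, zero_sub,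
        neg_eq_zero] at h1
      exact h1
    subst hy
    refine ⟨(LaurentPolynomial.T (-n) : LaurentPolynomial ℤ) • z, ?_⟩
    rw [map_smul, hz, map_zero, smul_zero, sub_zero, smul_smul, ← LaurentPolynomial.T_add]
    simp
  · rintro _ ⟨z, rfl⟩
    exact hgf z


/-- **Levine.** A finitely generated `ℤ`-torsion-free `ℤ[t,t⁻¹]`-module `M`
on which multiplication by `1 − t` is an automorphism has homological dimension `1`:
there is a short exact sequence `0 → ℤ[t,t⁻¹]ⁿ → ℤ[t,t⁻¹]ᵐ → M → 0`. -/
theorem stmt15 (M : Type) [AddCommGroup M] [Module (LaurentPolynomial ℤ) M]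
    [Module.Finite (LaurentPolynomial ℤ) M]
    (hMfree : ∀ (k : ℤ) (x : M), k ≠ 0 → k • x = 0 → x = 0)
    (hbij : Function.Bijective
      (fun x : M => ((1 : LaurentPolynomial ℤ) - LaurentPolynomial.T 1) • x)) :
    ∃ (n m : ℕ)
      (f : (Fin n → LaurentPolynomial ℤ) →ₗ[LaurentPolynomial ℤ] (Fin m → LaurentPolynomial ℤ))
      (g : (Fin m → LaurentPolynomial ℤ) →ₗ[LaurentPolynomial ℤ] M),
      Function.Injective f ∧ Function.Surjective g ∧ LinearMap.ker g = LinearMap.range f := by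
  obtain ⟨h, hinv, hint⟩ := exists_integral_inverse M hbij.2
  obtain ⟨L, hfg, hL, hspan⟩ := exists_stable_lattice M h hint
  have : Module.Finite ℤ L := Module.Finite.iff_fg.2 hfg
  have : Module.IsTorsionFree ℤ M := Module.isTorsionFree_iff_smul_eq_zero.2
    fun k x hk => or_iff_not_imp_left.2 fun h0 => hMfree k x h0 hk
  have : Module.Free ℤ L := Module.free_of_finite_type_torsion_free'
  exact ⟨_, _, exists_presentation M h hinv L hL hspan (Module.finBasis ℤ L)⟩
end

section
/- Let p and q be distinct primes. The resultant of the characteristic polynomial of any nontrivial permutation matrix of order a power of p with the cyclotomic polynomial Φ_{pq} is a nontrivial power of q. -/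
/-!
Over `ℤ` the resultant is multiplicative in its first argument, so the characteristic polynomial of
`g` is split into cyclotomic factors. Its complex roots are eigenvalues of the permutation matrix,
hence `p ^ k`-th roots of unity, and so it is a product of polynomials `Φ_{p ^ i}`
(`exists_resultant_eq_pow`).

The resultant of `Φ_{p ^ i}` with `Φ_{pq}` is the product of `Φ_{pq}(z)` over the primitive
`p ^ i`-th roots of unity `z` (`resultant_cyclotomic_eq_prod`). For `i ≠ 1` the identity
`Φ_{pq}(z) Φ_p(z) = Φ_p(z ^ q)` shows that this product is `1`, because `z ↦ z ^ q` permutes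
these roots. For `i = 1`, `Φ_{pq}(z) Φ_q(z) = Φ_q(1) = q`, and the values `Φ_q(z)` have product `1`
by the same permutation argument, so the resultant is `q ^ (p - 1)`.

The exponent is positive because `Φ_p` really occurs: a point moved by `g` lies on a cycle whose
length is divisible by `p`, which carries an eigenvector for any primitive `p`-th root of unity
(`exists_eigenvector`).
-/

/-- The Sylvester matrix of `f` and `g`: the first `g.natDegree` rows contain the
coefficients of `f` (in decreasing order, successively shifted), the remaining
`f.natDegree` rows contain the coefficients of `g`. -/
def sylvesterMatrix (f g : Polynomial ℤ) :
    Matrix (Fin (g.natDegree + f.natDegree)) (Fin (g.natDegree + f.natDegree)) ℤ :=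
  Matrix.of fun i j =>
    if (i : ℕ) < g.natDegree then
      (if (i : ℕ) ≤ (j : ℕ) ∧ (j : ℕ) ≤ (i : ℕ) + f.natDegree then
        f.coeff (f.natDegree + i - j) else 0)
    else
      (if (i : ℕ) - g.natDegree ≤ (j : ℕ) ∧ (j : ℕ) ≤ ((i : ℕ) - g.natDegree) + g.natDegree then
        g.coeff (g.natDegree + ((i : ℕ) - g.natDegree) - j) else 0)

/-- The resultant of two integer polynomials, as the determinant of their Sylvester matrix. -/
def polyResultant (f g : Polynomial ℤ) : ℤ := (sylvesterMatrix f g).det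

open Polynomial in
/-- The transpose of the Sylvester matrix used here is Mathlib's Sylvester matrix with both the
rows and the columns reversed; in particular no sign appears. -/
theorem polyResultant_eq_resultant (f g : ℤ[X]) : polyResultant f g = resultant f g := by
  have key : (sylvesterMatrix f g).transpose =
      (sylvester f g f.natDegree g.natDegree).submatrix
        (Fin.revPerm.trans (finCongr (add_comm g.natDegree f.natDegree)))
        (Fin.revPerm.trans (finCongr (add_comm g.natDegree f.natDegree))) := by
    ext i j
    obtain ⟨i, hi⟩ := i
    obtain ⟨j, hj⟩ := j
    simp only [sylvesterMatrix, sylvester, Matrix.transpose_apply, Matrix.of_apply,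
      Matrix.submatrix_apply, Equiv.trans_apply, Fin.revPerm_apply, finCongr_apply, Fin.addCases,
      eq_rec_constant, Set.mem_Icc, Fin.val_cast, Fin.val_rev, Fin.val_castLT, Fin.val_subNat]
    by_cases h : j < g.natDegree
    · rw [if_pos h, dif_neg (by omega)]
      congr 1
      · apply propext; omega
      · congr 1; omega
    · rw [if_neg h, dif_pos (by omega)]
      congr 1
      · apply propext; omega
      · congr 1; omega
  rw [polyResultant, ← Matrix.det_transpose, key, Matrix.det_submatrix_equiv_self, resultant]

open Polynomial in
theorem resultant_cyclotomic_eq_prod (d : ℕ) (hd : 0 < d) (f : ℤ[X]) :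
    ((resultant (cyclotomic d ℤ) f : ℤ) : ℂ) =
      ∏ z ∈ primitiveRoots d ℂ, (f.map (Int.castRingHom ℂ)).eval z := by
  have : NeZero (d : ℂ) := ⟨by exact_mod_cast hd.ne'⟩
  have h1 := resultant_map_map (cyclotomic d ℤ) f (cyclotomic d ℤ).natDegree f.natDegree
    (Int.castRingHom ℂ)
  rw [map_cyclotomic] at h1
  have h2 := resultant_eq_prod_eval (cyclotomic d ℂ) (f.map (Int.castRingHom ℂ)) f.natDegree
    natDegree_map_le (IsAlgClosed.splits _)
  rw [natDegree_cyclotomic] at h1 h2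
  rw [natDegree_cyclotomic, ← eq_intCast (Int.castRingHom ℂ), ← h1, h2,
    (cyclotomic.monic d ℂ).leadingCoeff, one_pow, one_mul, cyclotomic.roots_eq_primitiveRoots_val]
  rfl

/-- Raising to a power coprime to `d` permutes the primitive `d`-th roots of unity, so a ratio
`F (z ^ q) / F z` has product `1` over them. -/
theorem prod_primitiveRoots_eq_one {d q : ℕ} (hd : 0 < d) (hqd : q.Coprime d) (F G : ℂ → ℂ)
    (hF : ∀ z, IsPrimitiveRoot z d → F z ≠ 0)
    (hFG : ∀ z, IsPrimitiveRoot z d → G z * F z = F (z ^ q)) :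
    ∏ z ∈ primitiveRoots d ℂ, G z = 1 := by
  have mem : ∀ z, z ∈ primitiveRoots d ℂ ↔ IsPrimitiveRoot z d :=
    fun z => mem_primitiveRoots hd
  have inj : Set.InjOn (fun z : ℂ => z ^ q) (primitiveRoots d ℂ) := by
    intro z hz w hw h
    have hw' := (mem w).1 hw
    have hw0 : w ≠ 0 := hw'.ne_zero hd.ne'
    have h1 : (z / w) ^ q = 1 := by
      rw [div_pow, div_eq_one_iff_eq (pow_ne_zero q hw0)]
      exact h
    have h2 : (z / w) ^ d = 1 := by rw [div_pow, ((mem z).1 hz).pow_eq_one, hw'.pow_eq_one, div_one]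
    have h3 := pow_gcd_eq_one.2 ⟨h1, h2⟩
    rwa [hqd.gcd_eq_one, pow_one, div_eq_one_iff_eq hw0] at h3
  have img : (primitiveRoots d ℂ).image (fun z : ℂ => z ^ q) = primitiveRoots d ℂ := by
    apply Finset.eq_of_subset_of_card_le
    · intro w hw
      obtain ⟨z, hz, rfl⟩ := Finset.mem_image.1 hw
      exact (mem _).2 (((mem z).1 hz).pow_of_coprime q hqd)
    · rw [Finset.card_image_of_injOn inj]
  have e : ∏ z ∈ primitiveRoots d ℂ, F (z ^ q) = ∏ z ∈ primitiveRoots d ℂ, F z := by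
    conv_rhs => rw [← img]
    rw [Finset.prod_image inj]
  rw [← Finset.prod_congr rfl (fun z hz => hFG z ((mem z).1 hz)), Finset.prod_mul_distrib] at e
  exact mul_right_cancel₀ (Finset.prod_ne_zero_iff.2 fun z hz => hF z ((mem z).1 hz))
    (e.trans (one_mul _).symm)

open Polynomial in
theorem eval_cyclotomic_mul {p q : ℕ} (hq : q.Prime) (hqp : ¬ q ∣ p) (z : ℂ) :
    (cyclotomic (p * q) ℂ).eval z * (cyclotomic p ℂ).eval z = (cyclotomic p ℂ).eval (z ^ q) := by
  rw [← eval_mul, ← cyclotomic_expand_eq_cyclotomic_mul hq hqp, expand_eval]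

open Polynomial in
theorem resultant_cyclotomic_prime_pow {p q : ℕ} (hp : p.Prime) (hq : q.Prime) (hpq : p ≠ q)
    (i : ℕ) : resultant (cyclotomic (p ^ i) ℤ) (cyclotomic (p * q) ℤ) =
      if i = 1 then (q : ℤ) ^ (p - 1) else 1 := by
  have hd : 0 < p ^ i := pow_pos hp.pos i
  have hqd : q.Coprime (p ^ i) := ((Nat.coprime_primes hq hp).2 hpq.symm).pow_right i
  have hqp : ¬ q ∣ p := fun h => hpq ((Nat.prime_dvd_prime_iff_eq hq hp).1 h).symm
  have hpq' : ¬ p ∣ q := fun h => hpq ((Nat.prime_dvd_prime_iff_eq hp hq).1 h)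
  have : NeZero (p : ℂ) := ⟨by exact_mod_cast hp.ne_zero⟩
  have : Fact q.Prime := ⟨hq⟩
  apply Int.cast_injective (α := ℂ)
  rw [resultant_cyclotomic_eq_prod _ hd, map_cyclotomic]
  split_ifs with h
  · subst h
    rw [pow_one] at *
    -- At a primitive `p`-th root of unity `z`, `Φ_{pq}(z) Φ_q(z) = Φ_q(z ^ p) = Φ_q(1) = q`.
    have h1 : ∏ z ∈ primitiveRoots p ℂ, (cyclotomic q ℂ).eval z = 1 := by
      refine prod_primitiveRoots_eq_one hd hqd (fun z => z - 1) _ ?_ ?_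
      · intro z hz
        exact sub_ne_zero.2 (hz.ne_one hp.one_lt)
      · intro z _
        have := congrArg (eval z) (cyclotomic_prime_mul_X_sub_one ℂ q)
        simpa using this
    have h2 : ∏ z ∈ primitiveRoots p ℂ, ((cyclotomic (p * q) ℂ).eval z *
        (cyclotomic q ℂ).eval z) = ∏ z ∈ primitiveRoots p ℂ, (q : ℂ) := by
      refine Finset.prod_congr rfl fun z hz => ?_
      rw [mul_comm p q, eval_cyclotomic_mul hp hpq',
        ((mem_primitiveRoots hd).1 hz).pow_eq_one, eval_one_cyclotomic_prime]
    rw [Finset.prod_mul_distrib, h1, mul_one] at h2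
    rw [h2, Finset.prod_const, Complex.card_primitiveRoots, Nat.totient_prime hp]
    simp
  · rw [Int.cast_one]
    -- Here `Φ_p` does not vanish at the primitive `p ^ i`-th roots of unity.
    refine prod_primitiveRoots_eq_one hd hqd (fun z => (cyclotomic p ℂ).eval z) _ ?_ ?_
    · intro z hz hz0
      have := ((isRoot_cyclotomic_iff (R := ℂ)).1 hz0).unique hz
      exact h (Nat.pow_right_injective hp.two_le (by simpa using this.symm))
    · intro z _
      exact eval_cyclotomic_mul hq hqp z

open Polynomial in
theorem resultant_monic_mul (f₁ f₂ g : ℤ[X]) (h₁ : f₁.Monic) (h₂ : f₂.Monic) :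
    resultant (f₁ * f₂) g = resultant f₁ g * resultant f₂ g := by
  rw [h₁.natDegree_mul h₂, resultant_mul_left _ _ _ _ le_rfl]

open Polynomial in
theorem cyclotomic_dvd_of_root {d : ℕ} (hd : 0 < d) {z : ℂ} (hz : IsPrimitiveRoot z d) {f : ℤ[X]}
    (hf : (f.map (Int.castRingHom ℂ)).IsRoot z) : cyclotomic d ℤ ∣ f := by
  rw [cyclotomic_eq_minpoly hz hd]
  refine minpoly.isIntegrallyClosed_dvd (hz.isIntegral hd) ?_
  rwa [IsRoot, eval_map] at hf

open Polynomial in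
/-- A monic integer polynomial all of whose complex roots are `p ^ k`-th roots of unity is a product
of cyclotomic polynomials `Φ_{p ^ i}`, so the values in `resultant_cyclotomic_prime_pow` suffice. -/
theorem exists_resultant_eq_pow {p q : ℕ} (hp : p.Prime) (hq : q.Prime) (hpq : p ≠ q) (k : ℕ)
    (N : ℕ) (f : ℤ[X]) (hN : f.natDegree = N) (hf : f.Monic)
    (hroot : ∀ z : ℂ, (f.map (Int.castRingHom ℂ)).IsRoot z → z ^ p ^ k = 1) :
    ∃ m : ℕ, resultant f (cyclotomic (p * q) ℤ) = (q : ℤ) ^ m := by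
  induction N using Nat.strong_induction_on generalizing f with
  | _ N ih =>
    rcases Nat.eq_zero_or_pos N with h0 | hpos
    · refine ⟨0, ?_⟩
      rw [hf.natDegree_eq_zero.1 (hN.trans h0)]
      simp
    · obtain ⟨z, hz⟩ := IsAlgClosed.exists_root (f.map (Int.castRingHom ℂ)) (by
        rw [hf.degree_map, degree_eq_natDegree hf.ne_zero, hN]
        exact_mod_cast hpos.ne')
      obtain ⟨i, -, hi⟩ := (Nat.dvd_prime_pow hp).1 (orderOf_dvd_of_pow_eq_one (hroot z hz))
      have hd : 0 < p ^ i := pow_pos hp.pos i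
      obtain ⟨h, rfl⟩ := cyclotomic_dvd_of_root hd (hi ▸ IsPrimitiveRoot.orderOf z) hz
      have hh : h.Monic := (cyclotomic.monic (p ^ i) ℤ).of_mul_monic_left hf
      have hdeg := (cyclotomic.monic (p ^ i) ℤ).natDegree_mul hh
      rw [natDegree_cyclotomic, hN] at hdeg
      have := Nat.totient_pos.2 hd
      obtain ⟨m, hm⟩ := ih h.natDegree (by omega) h rfl hh fun w hw => hroot w (by
        rw [Polynomial.map_mul]
        exact root_mul_left_of_isRoot _ hw)
      rw [resultant_monic_mul _ _ _ (cyclotomic.monic _ _) hh, hm,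
        resultant_cyclotomic_prime_pow hp hq hpq]
      split_ifs
      · exact ⟨p - 1 + m, (pow_add _ _ _).symm⟩
      · exact ⟨m, one_mul _⟩

open Polynomial in
/-- The eigenvectors of a permutation matrix for `z` are the functions `v` with `v ∘ g = z • v`. -/
theorem isRoot_charpoly_permMatrix_iff {n : ℕ} (g : Equiv.Perm (Fin n)) (z : ℂ) :
    ((Matrix.charpoly (g.permMatrix ℤ)).map (Int.castRingHom ℂ)).IsRoot z ↔
      ∃ v : Fin n → ℂ, v ≠ 0 ∧ ∀ x, v (g x) = z * v x := by
  have hmap : (g.permMatrix ℤ).map (Int.castRingHom ℂ) = g.permMatrix ℂ := by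
    ext i j
    simp [PEquiv.toMatrix_apply]
  rw [← Matrix.charpoly_map, hmap, IsRoot, Matrix.eval_charpoly,
    ← Matrix.exists_mulVec_eq_zero_iff]
  refine exists_congr fun v => and_congr_right fun _ => ?_
  rw [Matrix.sub_mulVec, Matrix.permMatrix_mulVec, sub_eq_zero, funext_iff]
  refine forall_congr' fun x => ?_
  rw [Matrix.scalar_apply, Matrix.mulVec_diagonal, Function.comp_apply, eq_comm]

theorem pow_eq_one_of_eigenvector {n N : ℕ} {g : Equiv.Perm (Fin n)} (hN : g ^ N = 1) {z : ℂ}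
    {v : Fin n → ℂ} (hv : v ≠ 0) (h : ∀ x, v (g x) = z * v x) : z ^ N = 1 := by
  obtain ⟨x, hx⟩ := Function.ne_iff.1 hv
  have key : ∀ i : ℕ, v ((g ^ i) x) = z ^ i * v x := by
    intro i
    induction i with
    | zero => simp
    | succ i ih => rw [pow_succ', Equiv.Perm.mul_apply, h, ih, pow_succ']; ring
  have := key N
  rw [hN, Equiv.Perm.one_apply] at this
  exact mul_right_cancel₀ hx (by rw [← this, one_mul])

/-- A point `x` moved by `g` lies on a cycle of length divisible by `p`; weighting `g ^ i x` by
`z ^ i` gives an eigenvector for a `p`-th root of unity `z`, nonzero because every return to `x`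
has weight `1`. -/
theorem exists_eigenvector {n p k : ℕ} (hp : p.Prime) {g : Equiv.Perm (Fin n)} (hg : g ≠ 1)
    (hk : g ^ p ^ k = 1) {z : ℂ} (hz : z ^ p = 1) :
    ∃ v : Fin n → ℂ, v ≠ 0 ∧ ∀ x, v (g x) = z * v x := by
  obtain ⟨x, hx⟩ : ∃ x, g x ≠ x := by
    by_contra! h
    exact hg (Equiv.ext h)
  have hper : ∀ i : ℕ, (g ^ i) x = x ↔ Function.minimalPeriod g x ∣ i := fun i => by
    rw [← Function.isPeriodicPt_iff_minimalPeriod_dvd, Function.IsPeriodicPt, Function.IsFixedPt,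
      Equiv.Perm.iterate_eq_pow]
  have hpdvd : ∀ i : ℕ, (g ^ i) x = x → p ∣ i := by
    intro i hi
    refine dvd_trans ?_ ((hper i).1 hi)
    obtain ⟨j, -, hj⟩ := (Nat.dvd_prime_pow hp).1 ((hper (p ^ k)).1 (by simp [hk]))
    rw [hj]
    refine dvd_pow_self p fun h0 => hx ?_
    have := (hper 1).2 (by simp [hj, h0])
    simpa using this
  have hone : ∀ i : ℕ, p ∣ i → z ^ i = 1 := by
    rintro _ ⟨c, rfl⟩
    rw [pow_mul, hz, one_pow]
  refine ⟨fun y => ∑ i ∈ Finset.range (p ^ k), if (g ^ i) x = y then z ^ i else 0, ?_, ?_⟩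
  · -- Every nonzero term of the value at `x` equals `1`, and the term `i = 0` is one of them.
    refine Function.ne_iff.2 ⟨x, ?_⟩
    have h1 : (∑ i ∈ Finset.range (p ^ k), if (g ^ i) x = x then z ^ i else 0) =
        ((Finset.range (p ^ k)).filter fun i => (g ^ i) x = x).card := by
      rw [Finset.natCast_card_filter]
      refine Finset.sum_congr rfl fun i _ => ?_
      split_ifs with h
      · exact hone i (hpdvd i h)
      · rfl
    have h2 : 0 < ((Finset.range (p ^ k)).filter fun i => (g ^ i) x = x).card :=
      Finset.card_pos.2 ⟨0, by simp [hp.pos]⟩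
    simp only [h1, Pi.zero_apply]
    exact_mod_cast h2.ne'
  · intro y
    -- Shifting the summation index by one is harmless: the terms `0` and `p ^ k` agree.
    have hends : (if (g ^ p ^ k) x = g y then z ^ p ^ k else 0) =
        if (g ^ 0) x = g y then z ^ 0 else 0 := by
      rw [hone _ (hpdvd _ (by simp [hk]))]
      exact if_congr (by simp [hk]) (pow_zero z).symm rfl
    have hs := (Finset.sum_range_succ (fun i => if (g ^ i) x = g y then z ^ i else 0)
      (p ^ k)).symm.trans (Finset.sum_range_succ' _ _)
    rw [hends] at hs
    refine (add_right_cancel hs).trans ?_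
    rw [Finset.mul_sum]
    refine Finset.sum_congr rfl fun i _ => ?_
    rw [mul_ite, mul_zero, ← pow_succ']
    refine if_congr ?_ rfl rfl
    rw [pow_succ', Equiv.Perm.mul_apply, EmbeddingLike.apply_eq_iff_eq]

/-- For distinct primes `p` and `q`, the resultant of the characteristic
polynomial of any nontrivial permutation matrix of order a power of `p` with the
cyclotomic polynomial `Φ_{pq}` is a nontrivial power of `q`. -/
theorem stmt18 (p q : ℕ) (hp : p.Prime) (hq : q.Prime) (hpq : p ≠ q)
    (n : ℕ) (g : Equiv.Perm (Fin n)) (hg : g ≠ 1) (k : ℕ) (hord : orderOf g = p ^ k) :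
    ∃ m : ℕ, 1 ≤ m ∧
      polyResultant (Matrix.charpoly (g.permMatrix ℤ)) (Polynomial.cyclotomic (p * q) ℤ) =
        (q : ℤ) ^ m := by
  have hk : g ^ p ^ k = 1 := hord ▸ pow_orderOf_eq_one g
  have hroot : ∀ z : ℂ,
      ((Matrix.charpoly (g.permMatrix ℤ)).map (Int.castRingHom ℂ)).IsRoot z → z ^ p ^ k = 1 := by
    intro z hz
    obtain ⟨v, hv, h⟩ := (isRoot_charpoly_permMatrix_iff g z).1 hz
    exact pow_eq_one_of_eigenvector hk hv h
  have hζ := Complex.isPrimitiveRoot_exp p hp.ne_zero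
  obtain ⟨f, hf⟩ := cyclotomic_dvd_of_root hp.pos hζ
    ((isRoot_charpoly_permMatrix_iff g _).2 (exists_eigenvector hp hg hk hζ.pow_eq_one))
  have hmonic := Matrix.charpoly_monic (g.permMatrix ℤ)
  rw [hf] at hroot hmonic
  have hfm : f.Monic := (Polynomial.cyclotomic.monic p ℤ).of_mul_monic_left hmonic
  obtain ⟨m, hm⟩ := exists_resultant_eq_pow hp hq hpq k _ f rfl hfm fun w hw => hroot w (by
    rw [Polynomial.map_mul]
    exact Polynomial.root_mul_left_of_isRoot _ hw)
  have h1 := resultant_cyclotomic_prime_pow hp hq hpq 1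
  rw [pow_one, if_pos rfl] at h1
  refine ⟨p - 1 + m, ?_, ?_⟩
  · have := hp.two_le
    omega
  · rw [polyResultant_eq_resultant, hf,
      resultant_monic_mul _ _ _ (Polynomial.cyclotomic.monic _ _) hfm, h1, hm, pow_add]
end
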